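/- arXiv:2410.18402 — 7 statements merged into one kernel-verified Lean document; each statement's English description precedes it below -/
import Mathlib

section
/- Let (Ω, F, P) be a probability space and let z, w : Ω → ℝ be random variables with z⁴ and w⁴ integrable. Suppose E[z²] ≥ τ_u, E[z⁴] ≤ τ_l and E[w⁴] ≤ c_w, where τ_u, τ_l, c_w > 0. Let K, T > 0 satisfy K² ≥ τ_l/τ_u and T² ≥ 4√(τ_l · c_w)/τ_u. Then E[ z² · 1{|z| ≤ 2K} · 1{|w| ≤ T} ] ≥ τ_u / 2. -/
open MeasureTheory ProbabilityTheory

/-!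
Writing `f = z²` and `g = w²`, the mass of `f` removed by the truncation is at most
`∫_{f > (2K)²} f + ∫_{g > T²} f`. Markov's inequality with weight `f` bounds the two terms by
`E[f²] / (2K)²` and `E[f g] / T²`, and Cauchy–Schwarz bounds `E[f g]`. The thresholds make
each term at most `τ_u / 4`.
-/

section

variable {Ω : Type*} {mΩ : MeasurableSpace Ω} {μ : Measure Ω} {f g : Ω → ℝ} {s t : Set Ω}

theorem memLp_two_of_nonneg_of_integrable_sq (hf : 0 ≤ᵐ[μ] f)
    (hf2 : Integrable (fun ω => f ω ^ 2) μ) : MemLp f 2 μ := by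
  have sqrt_sq_ae_eq : (fun ω => √(f ω ^ 2)) =ᵐ[μ] f := hf.mono fun _ => Real.sqrt_sq
  have f_meas : AEStronglyMeasurable f μ :=
    hf2.aemeasurable.sqrt.aestronglyMeasurable.congr sqrt_sq_ae_eq
  exact (memLp_two_iff_integrable_sq f_meas).2 hf2

theorem integral_mul_le_sqrt_integral_sq_mul_integral_sq (hf : MemLp f 2 μ) (hg : MemLp g 2 μ) :
    ∫ ω, f ω * g ω ∂μ ≤ √((∫ ω, f ω ^ 2 ∂μ) * ∫ ω, g ω ^ 2 ∂μ) := by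
  have holder := integral_mul_norm_le_Lp_mul_Lq (μ := μ) Real.HolderConjugate.two_two
    (by simpa using hf) (by simpa using hg)
  calc ∫ ω, f ω * g ω ∂μ
      ≤ ∫ ω, ‖f ω‖ * ‖g ω‖ ∂μ := by
        simpa only [← norm_mul] using (Real.le_norm_self _).trans (norm_integral_le_integral_norm _)
    _ ≤ √(∫ ω, f ω ^ 2 ∂μ) * √(∫ ω, g ω ^ 2 ∂μ) := by
        simpa [Real.sqrt_eq_rpow] using holder
    _ = √((∫ ω, f ω ^ 2 ∂μ) * ∫ ω, g ω ^ 2 ∂μ) :=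
        (Real.sqrt_mul (integral_nonneg fun ω => sq_nonneg (f ω)) _).symm

theorem setIntegral_setOf_lt_le_integral_mul_div {a : ℝ} (ha : 0 < a) (hf : 0 ≤ᵐ[μ] f)
    (hg : 0 ≤ᵐ[μ] g) (hg_meas : AEMeasurable g μ)
    (hfg : Integrable (fun ω => f ω * g ω) μ) :
    ∫ ω in {ω | a < g ω}, f ω ∂μ ≤ (∫ ω, f ω * g ω ∂μ) / a := by
  have le_on_set : ∀ᵐ ω ∂μ.restrict {ω | a < g ω}, f ω ≤ f ω * g ω / a := by
    filter_upwards [ae_restrict_mem₀ (nullMeasurableSet_lt aemeasurable_const hg_meas),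
      ae_restrict_of_ae hf] with ω a_lt_g f_nonneg
    rw [le_div_iff₀ ha]
    exact mul_le_mul_of_nonneg_left a_lt_g.le f_nonneg
  calc ∫ ω in {ω | a < g ω}, f ω ∂μ
      ≤ ∫ ω in {ω | a < g ω}, f ω * g ω / a ∂μ :=
        integral_mono_of_nonneg (ae_restrict_of_ae hf) (hfg.div_const a).integrableOn le_on_set
    _ ≤ ∫ ω, f ω * g ω / a ∂μ :=
        setIntegral_le_integral (hfg.div_const a) (by
          filter_upwards [hf, hg] with ω f_nonneg g_nonneg
          exact div_nonneg (mul_nonneg f_nonneg g_nonneg) ha.le)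
    _ = (∫ ω, f ω * g ω ∂μ) / a := integral_div a _

theorem setIntegral_union_le_add (hf : 0 ≤ᵐ[μ] f) (hfi : Integrable f μ) :
    ∫ ω in s ∪ t, f ω ∂μ ≤ ∫ ω in s, f ω ∂μ + ∫ ω in t, f ω ∂μ :=
  calc ∫ ω in s ∪ t, f ω ∂μ
      ≤ ∫ ω, f ω ∂(μ.restrict s + μ.restrict t) :=
        integral_mono_measure (Measure.restrict_union_le s t)
          (ae_add_measure_iff.2 ⟨ae_restrict_of_ae hf, ae_restrict_of_ae hf⟩)
          (hfi.restrict.add_measure hfi.restrict)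
    _ = ∫ ω in s, f ω ∂μ + ∫ ω in t, f ω ∂μ := integral_add_measure hfi.restrict hfi.restrict

theorem integral_le_setIntegral_inter_add (hs : NullMeasurableSet s μ)
    (ht : NullMeasurableSet t μ) (hf : 0 ≤ᵐ[μ] f) (hfi : Integrable f μ) :
    ∫ ω, f ω ∂μ ≤ ∫ ω in s ∩ t, f ω ∂μ + (∫ ω in sᶜ, f ω ∂μ + ∫ ω in tᶜ, f ω ∂μ) := by
  rw [← integral_add_compl₀ (hs.inter ht) hfi, Set.compl_inter]
  gcongr
  exact setIntegral_union_le_add hf hfi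

theorem integral_le_setIntegral_truncation_add {a b : ℝ} (ha : 0 < a) (hb : 0 < b)
    (hf : 0 ≤ᵐ[μ] f) (hg : 0 ≤ᵐ[μ] g) (hfi : Integrable f μ) (hf2 : MemLp f 2 μ)
    (hg2 : MemLp g 2 μ) :
    ∫ ω, f ω ∂μ ≤ ∫ ω in {ω | f ω ≤ a} ∩ {ω | g ω ≤ b}, f ω ∂μ +
      ((∫ ω, f ω ^ 2 ∂μ) / a + √((∫ ω, f ω ^ 2 ∂μ) * ∫ ω, g ω ^ 2 ∂μ) / b) := by
  have f_meas := hf2.aestronglyMeasurable.aemeasurable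
  have g_meas := hg2.aestronglyMeasurable.aemeasurable
  have f_tail : ∫ ω in {ω | f ω ≤ a}ᶜ, f ω ∂μ ≤ (∫ ω, f ω ^ 2 ∂μ) / a := by
    simpa only [Set.compl_ofPred, not_le, sq] using
      setIntegral_setOf_lt_le_integral_mul_div ha hf hf f_meas (hf2.integrable_mul hf2)
  have g_tail : ∫ ω in {ω | g ω ≤ b}ᶜ, f ω ∂μ ≤
      √((∫ ω, f ω ^ 2 ∂μ) * ∫ ω, g ω ^ 2 ∂μ) / b :=
    calc ∫ ω in {ω | g ω ≤ b}ᶜ, f ω ∂μ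
        ≤ (∫ ω, f ω * g ω ∂μ) / b := by
          simpa only [Set.compl_ofPred, not_le] using
            setIntegral_setOf_lt_le_integral_mul_div hb hf hg g_meas (hf2.integrable_mul hg2)
      _ ≤ √((∫ ω, f ω ^ 2 ∂μ) * ∫ ω, g ω ^ 2 ∂μ) / b := by
          gcongr
          exact integral_mul_le_sqrt_integral_sq_mul_integral_sq hf2 hg2
  exact (integral_le_setIntegral_inter_add (nullMeasurableSet_le f_meas aemeasurable_const)
    (nullMeasurableSet_le g_meas aemeasurable_const) hf hfi).trans (by gcongr)

theorem half_le_setIntegral_truncation {m M C a b : ℝ} (hm : 0 < m) (ha : 0 < a) (hb : 0 < b)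
    (hf : 0 ≤ᵐ[μ] f) (hg : 0 ≤ᵐ[μ] g) (hf2 : MemLp f 2 μ) (hg2 : MemLp g 2 μ)
    (hfm : m ≤ ∫ ω, f ω ∂μ) (hfM : ∫ ω, f ω ^ 2 ∂μ ≤ M) (hgC : ∫ ω, g ω ^ 2 ∂μ ≤ C)
    (hMa : 4 * M / m ≤ a) (hMCb : 4 * √(M * C) / m ≤ b) :
    m / 2 ≤ ∫ ω in {ω | f ω ≤ a} ∩ {ω | g ω ≤ b}, f ω ∂μ := by
  have hfi : Integrable f μ := .of_integral_ne_zero (hm.trans_le hfm).ne'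
  have truncation := integral_le_setIntegral_truncation_add ha hb hf hg hfi hf2 hg2
  have f_tail : (∫ ω, f ω ^ 2 ∂μ) / a ≤ m / 4 := by
    rw [div_le_iff₀ hm] at hMa
    rw [div_le_iff₀ ha]
    linarith
  have g_tail : √((∫ ω, f ω ^ 2 ∂μ) * ∫ ω, g ω ^ 2 ∂μ) / b ≤ m / 4 := by
    have hM : 0 ≤ M := (integral_nonneg fun ω => sq_nonneg (f ω)).trans hfM
    have sqrt_le : √((∫ ω, f ω ^ 2 ∂μ) * ∫ ω, g ω ^ 2 ∂μ) ≤ √(M * C) := by gcongr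
    rw [div_le_iff₀ hm] at hMCb
    rw [div_le_iff₀ hb]
    linarith
  linarith

theorem integral_mul_indicator_one_mul_indicator_one (hs : NullMeasurableSet s μ)
    (ht : NullMeasurableSet t μ) :
    ∫ ω, f ω * s.indicator (fun _ => (1 : ℝ)) ω * t.indicator (fun _ => (1 : ℝ)) ω ∂μ =
      ∫ ω in s ∩ t, f ω ∂μ := by
  rw [← integral_indicator₀ (hs.inter ht)]
  congr with ω
  by_cases hωs : ω ∈ s <;> by_cases hωt : ω ∈ t <;> simp [hωs, hωt]

theorem truncated_second_moment_bound_general {z w : Ω → ℝ}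
    (hz4 : Integrable (fun ω => z ω ^ 4) μ) (hw4 : Integrable (fun ω => w ω ^ 4) μ)
    {τu τl cw K T : ℝ} (hτu : 0 < τu) (hK : 0 < K) (hT : 0 < T)
    (hz2 : τu ≤ ∫ ω, z ω ^ 2 ∂μ) (hz4b : ∫ ω, z ω ^ 4 ∂μ ≤ τl) (hw4b : ∫ ω, w ω ^ 4 ∂μ ≤ cw)
    (hK2 : τl / τu ≤ K ^ 2) (hT2 : 4 * √(τl * cw) / τu ≤ T ^ 2) :
    τu / 2 ≤ ∫ ω, z ω ^ 2 * Set.indicator {ω' | |z ω'| ≤ 2 * K} (fun _ => (1 : ℝ)) ω *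
      Set.indicator {ω' | |w ω'| ≤ T} (fun _ => (1 : ℝ)) ω ∂μ := by
  have pow_four (x : ℝ) : x ^ 4 = (x ^ 2) ^ 2 := by ring
  have abs_le_iff {x a : ℝ} (ha : 0 < a) : |x| ≤ a ↔ x ^ 2 ≤ a ^ 2 := by
    rw [sq_le_sq, abs_of_pos ha]
  simp only [pow_four] at hz4 hw4 hz4b hw4b
  simp only [abs_le_iff hT, abs_le_iff (mul_pos two_pos hK)]
  have z_sq_memLp := memLp_two_of_nonneg_of_integrable_sq (.of_forall fun ω => sq_nonneg (z ω)) hz4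
  have w_sq_memLp := memLp_two_of_nonneg_of_integrable_sq (.of_forall fun ω => sq_nonneg (w ω)) hw4
  have z_tail_threshold : 4 * τl / τu ≤ (2 * K) ^ 2 := by
    rw [mul_div_assoc]
    linarith
  rw [integral_mul_indicator_one_mul_indicator_one
    (nullMeasurableSet_le z_sq_memLp.aestronglyMeasurable.aemeasurable aemeasurable_const)
    (nullMeasurableSet_le w_sq_memLp.aestronglyMeasurable.aemeasurable aemeasurable_const)]
  exact half_le_setIntegral_truncation hτu (by positivity) (by positivity)
    (.of_forall fun ω => sq_nonneg (z ω)) (.of_forall fun ω => sq_nonneg (w ω))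
    z_sq_memLp w_sq_memLp hz2 hz4b hw4b z_tail_threshold hT2

end

/-- Truncated second-moment bound: if `E[z²] ≥ τ_u`, `E[z⁴] ≤ τ_l`, `E[w⁴] ≤ c_w`,
`K² ≥ τ_l/τ_u` and `T² ≥ 4√(τ_l·c_w)/τ_u`, then
`E[z² · 1{|z| ≤ 2K} · 1{|w| ≤ T}] ≥ τ_u/2`. -/
theorem truncated_second_moment_bound
    {Ω : Type*} [MeasureSpace Ω] [IsProbabilityMeasure (ℙ : Measure Ω)]
    (z w : Ω → ℝ) (hz : Measurable z) (hw : Measurable w)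
    (hz4 : Integrable (fun ω => z ω ^ 4)) (hw4 : Integrable (fun ω => w ω ^ 4))
    (τu τl cw K T : ℝ) (hτu : 0 < τu) (hτl : 0 < τl) (hcw : 0 < cw)
    (hK : 0 < K) (hT : 0 < T)
    (hz2 : τu ≤ ∫ ω, z ω ^ 2) (hz4b : (∫ ω, z ω ^ 4) ≤ τl) (hw4b : (∫ ω, w ω ^ 4) ≤ cw)
    (hK2 : τl / τu ≤ K ^ 2) (hT2 : 4 * Real.sqrt (τl * cw) / τu ≤ T ^ 2) :
    τu / 2 ≤ ∫ ω, z ω ^ 2 * Set.indicator {ω' | |z ω'| ≤ 2 * K} (fun _ => (1 : ℝ)) ω *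
      Set.indicator {ω' | |w ω'| ≤ T} (fun _ => (1 : ℝ)) ω :=
  truncated_second_moment_bound_general hz4 hw4 hτu hK hT hz2 hz4b hw4b hK2 hT2
end

section
/- Let E be a real inner product space, f : E → ℝ convex and differentiable, x ∈ E, a, b ≥ 0, and N : E → [0, ∞) a positively homogeneous functional (N(γu) = γ·N(u) for all γ ≥ 0 and u ∈ E). Suppose that for every u ∈ E with ‖u‖ = 1 one has ⟨∇f(x + u) - ∇f(x), u⟩ ≥ a - b·N(u)². Then for every v ∈ E with ‖v‖ > 1, ⟨∇f(x + v) - ∇f(x), v⟩ ≥ a‖v‖ - b·N(v)²/‖v‖. -/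
open RealInnerProductSpace

/-!
The gradient of a convex function is a monotone operator `T`, so `t ↦ T (x + t • u) u` is
nondecreasing along every line. Comparing `t = 1` with `t = r ≥ 1` shows that the increment
`(T (x + u) - T x) u` grows at least linearly when `u` is replaced by `r • u`. For `r = ‖v‖` and
`u = v / ‖v‖` this carries a lower bound from the unit sphere to `v`.
-/

section Monotone

variable {E : Type*} [AddCommGroup E] [Module ℝ E]

/-- Monotone operators from a real vector space to its dual, in the sense of convex analysis. The
algebraic dual is used, so that Gateaux gradients are covered without a topology on `E`. -/
def IsMonotoneOperator (T : E → Module.Dual ℝ E) : Prop :=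
  ∀ y z, 0 ≤ (T z - T y) (z - y)

namespace IsMonotoneOperator

variable {T : E → Module.Dual ℝ E}

theorem monotone_apply_add_smul (hT : IsMonotoneOperator T) (x u : E) :
    Monotone fun t : ℝ ↦ T (x + t • u) u := by
  intro s t hst
  rcases hst.eq_or_lt with rfl | hlt
  · rfl
  have increment_nonneg : 0 ≤ (t - s) * (T (x + t • u) - T (x + s • u)) u := by
    simpa only [add_sub_add_left_eq_sub, ← sub_smul, map_smul, smul_eq_mul]
      using hT (x + s • u) (x + t • u)
  exact sub_nonneg.1 (nonneg_of_mul_nonneg_right increment_nonneg (sub_pos.2 hlt))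

theorem mul_sub_apply_le_sub_apply_smul (hT : IsMonotoneOperator T) (x u : E) {r : ℝ}
    (hr : 1 ≤ r) : r * (T (x + u) - T x) u ≤ (T (x + r • u) - T x) (r • u) := by
  have apply_le : T (x + u) u ≤ T (x + r • u) u := by
    simpa only [one_smul] using hT.monotone_apply_add_smul x u hr
  rw [map_smul, smul_eq_mul, LinearMap.sub_apply, LinearMap.sub_apply]
  gcongr

end IsMonotoneOperator

theorem le_sub_of_convexOn_of_hasLineDerivAt {s : Set E} {f : E → ℝ} {y z : E} {d : ℝ}
    (hf : ConvexOn ℝ s f) (hy : y ∈ s) (hz : z ∈ s) (hd : HasLineDerivAt ℝ f d y (z - y)) :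
    d ≤ f z - f y := by
  have convexOn_line := hf.comp_affineMap (AffineMap.lineMap (k := ℝ) y z)
  have hasDerivAt_line : HasDerivAt (f ∘ AffineMap.lineMap (k := ℝ) y z) d 0 := by
    simpa only [HasLineDerivAt, Function.comp_def, AffineMap.lineMap_apply_module', add_comm y]
      using hd
  simpa [slope_def_field] using convexOn_line.le_slope_of_hasDerivAt
    (by simpa using hy) (by simpa using hz) one_pos hasDerivAt_line

theorem isMonotoneOperator_of_convexOn {f : E → ℝ} {T : E → Module.Dual ℝ E}
    (hf : ConvexOn ℝ Set.univ f) (hT : ∀ y v, HasLineDerivAt ℝ f (T y v) y v) :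
    IsMonotoneOperator T := by
  intro y z
  have lower : T y (z - y) ≤ f z - f y :=
    le_sub_of_convexOn_of_hasLineDerivAt hf (Set.mem_univ y) (Set.mem_univ z) (hT y _)
  have upper : T z (y - z) ≤ f y - f z :=
    le_sub_of_convexOn_of_hasLineDerivAt hf (Set.mem_univ z) (Set.mem_univ y) (hT z _)
  rw [← neg_sub z y, map_neg] at upper
  rw [LinearMap.sub_apply]
  linarith

end Monotone

theorem isMonotoneOperator_innerₗ_of_hasGradientAt {E : Type*} [NormedAddCommGroup E]
    [InnerProductSpace ℝ E] [CompleteSpace E] {f : E → ℝ} {f' : E → E}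
    (hf : ConvexOn ℝ Set.univ f) (hf' : ∀ y, HasGradientAt f (f' y) y) :
    IsMonotoneOperator fun y ↦ innerₗ E (f' y) :=
  isMonotoneOperator_of_convexOn hf fun y v ↦ (hf' y).hasFDerivAt.hasLineDerivAt v

theorem rsc_rescaling_general {E : Type*} [SeminormedAddCommGroup E] [NormedSpace ℝ E]
    {T : E → Module.Dual ℝ E} (hT : IsMonotoneOperator T) (x : E) (a b : ℝ) {N : E → ℝ}
    (hNhom : ∀ γ : ℝ, 0 < γ → ∀ u, N (γ • u) = γ * N u)
    (hunit : ∀ u : E, ‖u‖ = 1 → a - b * N u ^ 2 ≤ (T (x + u) - T x) u)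
    {v : E} (hv : 1 ≤ ‖v‖) :
    a * ‖v‖ - b * N v ^ 2 / ‖v‖ ≤ (T (x + v) - T x) v := by
  have norm_pos : 0 < ‖v‖ := one_pos.trans_le hv
  set u := ‖v‖⁻¹ • v with hu
  have norm_u : ‖u‖ = 1 := by
    rw [hu, norm_smul, norm_inv, norm_norm, inv_mul_cancel₀ norm_pos.ne']
  calc
    a * ‖v‖ - b * N v ^ 2 / ‖v‖ = ‖v‖ * (a - b * N u ^ 2) := by
      rw [hu, hNhom _ (inv_pos.2 norm_pos)]
      field_simp
    _ ≤ ‖v‖ * (T (x + u) - T x) u := by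
      gcongr
      exact hunit u norm_u
    _ ≤ (T (x + ‖v‖ • u) - T x) (‖v‖ • u) := hT.mul_sub_apply_le_sub_apply_smul x u hv
    _ = (T (x + v) - T x) v := by rw [hu, smul_inv_smul₀ norm_pos.ne']

/-- Rescaling argument: for a convex differentiable `f`, a restricted strong
convexity lower bound on the unit sphere extends to vectors of norm greater
than one. -/
theorem rsc_rescaling {E : Type*} [NormedAddCommGroup E] [InnerProductSpace ℝ E] [CompleteSpace E]
    (f : E → ℝ) (f' : E → E) (hconv : ConvexOn ℝ Set.univ f)
    (hdiff : ∀ x, HasGradientAt f (f' x) x)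
    (x : E) (a b : ℝ) (ha : 0 ≤ a) (hb : 0 ≤ b)
    (N : E → ℝ) (hN0 : ∀ u, 0 ≤ N u)
    (hNhom : ∀ γ : ℝ, 0 ≤ γ → ∀ u, N (γ • u) = γ * N u)
    (hunit : ∀ u : E, ‖u‖ = 1 → a - b * N u ^ 2 ≤ ⟪f' (x + u) - f' x, u⟫)
    (v : E) (hv : 1 < ‖v‖) :
    a * ‖v‖ - b * N v ^ 2 / ‖v‖ ≤ ⟪f' (x + v) - f' x, v⟫ := by
  have gradient_monotone := isMonotoneOperator_innerₗ_of_hasGradientAt hconv hdiff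
  simpa [inner_sub_left] using rsc_rescaling_general gradient_monotone x a b
    (fun γ hγ ↦ hNhom γ hγ.le) (by simpa [inner_sub_left] using hunit) hv.le
end

section
/- Let λ, k₀, μ > 0 and let g_λ satisfy Assumption 1 with parameters λ, k₀, μ. Then λ·k₀·x ≤ g_λ(x) + (μ/2)x² for all x ≥ 0. -/
/-- Assumption 1 of the paper on the nonconvex penalty `g_λ` (with derivative
`g'` on `(0, ∞)`) and parameters `lam = λ`, `k0 = k₀`, `mu = μ`. -/
structure Assumption1 (g g' : ℝ → ℝ) (lam k0 mu : ℝ) : Prop where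
  nonneg : ∀ x, 0 ≤ g x
  symm : ∀ x, g (-x) = g x
  concave : ConcaveOn ℝ (Set.Ici (0 : ℝ)) g
  mono : MonotoneOn g (Set.Ici (0 : ℝ))
  zero : g 0 = 0
  ratio_anti : AntitoneOn (fun x => g x / x) (Set.Ioi (0 : ℝ))
  hasDeriv : ∀ x : ℝ, 0 < x → HasDerivAt g (g' x) x
  deriv_le : ∀ x : ℝ, 0 < x → g' x ≤ lam * k0
  deriv_lim : Filter.Tendsto g' (nhdsWithin 0 (Set.Ioi 0)) (nhds (lam * k0))
  convex_quad : ConvexOn ℝ (Set.Ioi (0 : ℝ)) (fun x => g x + mu / 2 * x ^ 2)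

/-!
Put `F x = g x + (μ/2) x²`. For `0 < y < x` convexity places the value at `x` of the tangent line of
`F` at `y` below `F x`. As `y → 0⁺` the slope of this line tends to `λ k₀`, while lower
semicontinuity of `F` at `0` keeps its base value `F y` asymptotically above `F 0 = 0`. A concave
function on `[0, ∞)` may jump at the endpoint, so this semicontinuity is read off instead from the
fact that `0` is a minimum of `g`.
-/

open Filter Set Topology

theorem add_mul_sub_le_of_convexOn_of_tendsto_rightDeriv {F F' : ℝ → ℝ} {s : Set ℝ} {a c x : ℝ}
    (hconv : ConvexOn ℝ s F) (hs : s ∈ 𝓝[>] a)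
    (hlsc : LowerSemicontinuousWithinAt F (Ioi a) a)
    (hderiv : ∀ᶠ y in 𝓝[>] a, HasDerivWithinAt F (F' y) (Ioi y) y)
    (hlim : Tendsto F' (𝓝[>] a) (𝓝 c)) (hx : x ∈ s) (hax : a < x) :
    F a + c * (x - a) ≤ F x := by
  have tangent_le : ∀ᶠ y in 𝓝[>] a, F y ≤ F x - F' y * (x - y) := by
    filter_upwards [hs, hderiv, Ioo_mem_nhdsGT hax] with y hy hFy hyx
    have slope_le := hconv.le_slope_of_hasDerivWithinAt_Ioi hy hx hyx.2 hFy
    rw [slope_def_field, le_div_iff₀ (sub_pos.2 hyx.2)] at slope_le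
    linarith
  have tangent_lim : Tendsto (fun y => F x - F' y * (x - y)) (𝓝[>] a) (𝓝 (F x - c * (x - a))) :=
    (hlim.mul ((tendsto_nhdsWithin_of_tendsto_nhds tendsto_id).const_sub x)).const_sub (F x)
  have base_le : F a ≤ F x - c * (x - a) := by
    refine le_of_forall_lt_imp_le_of_dense fun b hb => ge_of_tendsto tangent_lim ?_
    filter_upwards [hlsc b hb, tangent_le] with y hby hy using hby.le.trans hy
  linarith

theorem hasDerivAt_add_half_mul_sq {g : ℝ → ℝ} {d y : ℝ} (mu : ℝ) (hg : HasDerivAt g d y) :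
    HasDerivAt (fun x => g x + mu / 2 * x ^ 2) (d + mu * y) y := by
  refine (hg.add ((hasDerivAt_pow 2 y).const_mul (mu / 2))).congr_deriv ?_
  push_cast
  ring

theorem scalar_penalty_lower_bound_general {g g' : ℝ → ℝ} {c mu x : ℝ}
    (hlsc : LowerSemicontinuousWithinAt g (Ioi 0) 0)
    (hderiv : ∀ y, 0 < y → HasDerivAt g (g' y) y)
    (hlim : Tendsto g' (𝓝[>] 0) (𝓝 c))
    (hconv : ConvexOn ℝ (Ioi 0) fun y => g y + mu / 2 * y ^ 2) (hx : 0 ≤ x) :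
    g 0 + c * x ≤ g x + mu / 2 * x ^ 2 := by
  rcases hx.eq_or_lt with rfl | hx
  · simp
  have quad_lsc : LowerSemicontinuousWithinAt (fun y => g y + mu / 2 * y ^ 2) (Ioi 0) 0 :=
    hlsc.add (ContinuousWithinAt.lowerSemicontinuousWithinAt (by fun_prop))
  have quad_deriv : ∀ᶠ y in 𝓝[>] 0,
      HasDerivWithinAt (fun y => g y + mu / 2 * y ^ 2) (g' y + mu * y) (Ioi y) y := by
    filter_upwards [self_mem_nhdsWithin] with y hy
    exact (hasDerivAt_add_half_mul_sq mu (hderiv y hy)).hasDerivWithinAt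
  have quad_deriv_lim : Tendsto (fun y => g' y + mu * y) (𝓝[>] 0) (𝓝 c) := by
    simpa using hlim.add ((tendsto_nhdsWithin_of_tendsto_nhds tendsto_id).const_mul mu)
  simpa using add_mul_sub_le_of_convexOn_of_tendsto_rightDeriv hconv self_mem_nhdsWithin
    quad_lsc quad_deriv quad_deriv_lim hx hx

theorem Assumption1.lowerSemicontinuousAt_zero {g g' : ℝ → ℝ} {lam k0 mu : ℝ}
    (h : Assumption1 g g' lam k0 mu) : LowerSemicontinuousAt g 0 :=
  fun _ hb => .of_forall fun y => hb.trans_le (h.zero.trans_le (h.nonneg y))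

/-- The scalar inequality `λ·k₀·x ≤ g_λ(x) + (μ/2)x²` for all `x ≥ 0`. -/
theorem scalar_penalty_lower_bound (g g' : ℝ → ℝ) (lam k0 mu : ℝ)
    (hlam : 0 < lam) (hk0 : 0 < k0) (hmu : 0 < mu)
    (h : Assumption1 g g' lam k0 mu) (x : ℝ) (hx : 0 ≤ x) :
    lam * k0 * x ≤ g x + mu / 2 * x ^ 2 := by
  simpa [h.zero] using scalar_penalty_lower_bound_general
    (h.lowerSemicontinuousAt_zero.lowerSemicontinuousWithinAt _) h.hasDeriv h.deriv_lim
    h.convex_quad hx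
end

section
/- Let E be a real inner product space, f : E → ℝ differentiable with L-Lipschitz gradient (‖∇f(Y₁) - ∇f(Y₂)‖ ≤ L‖Y₁ - Y₂‖ for all Y₁, Y₂ ∈ E, L ≥ 0), S₁ : E → ℝ any function, S₂ : E → ℝ convex and differentiable, D ⊆ E, β > 0, ξ ∈ (0, 1/2), and ρ > L/(1 - 2ξ). Let X, X⁺ ∈ D and W ∈ E. Define Q(Y) := f(X) + ⟨∇f(X), Y - X⟩ + (ρ/2)‖Y - X‖² + βS₁(Y) - βS₂(X) - β⟨∇S₂(X), Y - X⟩ and H(Y) := f(Y) + βS₁(Y) - βS₂(Y). Assume Q(Y) ≥ Q(X⁺) + ⟨W, Y - X⁺⟩ for all Y ∈ D, and ‖W‖ ≤ ξρ‖X⁺ - X‖. Then H(X⁺) + a‖X⁺ - X‖² ≤ H(X), where a := (1 - 2ξ)ρ/2 - L/2 > 0. -/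
open RealInnerProductSpace

/-!
The majorant `Q` agrees with `H` at the current iterate `x` and, by the descent lemma for `f` and
the subgradient inequality for `S₂`, exceeds `H y` by at least `(ρ - L) / 2 * ‖y - x‖ ^ 2`. An
inexact minimizer `y` of `Q` with certificate `‖w‖ ≤ ξ * ρ * ‖y - x‖` loses at most
`ξ * ρ * ‖y - x‖ ^ 2` against `Q x = H x`, and `a` is the difference of the two coefficients. Only
the pairing of gradients with displacements enters, so the argument works with continuous linear
functionals on any real normed space.
-/

section DescentLemma

open Set AffineMap

variable {E : Type*} [NormedAddCommGroup E] [NormedSpace ℝ E] {s : Set E} {x y : E}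

theorem norm_sub_sub_fderiv_le_of_norm_fderiv_sub_le {F : Type*} [NormedAddCommGroup F]
    [NormedSpace ℝ F] {f : E → F} {f' : E → E →L[ℝ] F} {L : ℝ} (hs : StarConvex ℝ x s)
    (hf : ∀ z ∈ s, HasFDerivWithinAt f (f' z) s z)
    (hlip : ∀ z ∈ s, ‖f' z - f' x‖ ≤ L * ‖z - x‖) (hy : y ∈ s) :
    ‖f y - f x - f' x (y - x)‖ ≤ L / 2 * ‖y - x‖ ^ 2 := by
  set γ : ℝ →ᵃ[ℝ] E := lineMap x y
  have hγ : MapsTo γ (Icc 0 1) s :=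
    mapsTo_iff_image_subset.2 (segment_eq_image_lineMap ℝ x y ▸ hs.segment_subset hy)
  let remainder : ℝ → F := fun t ↦ f (γ t) - f x - t • f' x (y - x)
  have hremainder : ∀ t ∈ Icc (0 : ℝ) 1,
      HasDerivWithinAt remainder ((f' (γ t) - f' x) (y - x)) (Icc 0 1) t := fun t ht ↦ by
    have hcomp : HasDerivWithinAt (f ∘ γ) (f' (γ t) (y - x)) (Icc 0 1) t :=
      (hf (γ t) (hγ ht)).comp_hasDerivWithinAt t hasDerivWithinAt_lineMap hγ
    simpa [remainder] using (hcomp.sub_const (f x)).fun_sub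
      ((hasDerivWithinAt_id t (Icc 0 1)).smul_const (f' x (y - x)))
  have hquadratic : ∀ t : ℝ,
      HasDerivAt (fun t ↦ L / 2 * ‖y - x‖ ^ 2 * t ^ 2) (L * ‖y - x‖ ^ 2 * t) t := fun t ↦
    ((hasDerivAt_pow 2 t).const_mul _).congr_deriv (by push_cast; ring)
  have hbound : ∀ t ∈ Ico (0 : ℝ) 1, ‖(f' (γ t) - f' x) (y - x)‖ ≤ L * ‖y - x‖ ^ 2 * t :=
    fun t ht ↦ calc
      ‖(f' (γ t) - f' x) (y - x)‖ ≤ L * ‖γ t - x‖ * ‖y - x‖ :=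
        ContinuousLinearMap.le_of_opNorm_le _ (hlip _ (hγ (Ico_subset_Icc_self ht))) _
      _ = L * (t * ‖y - x‖) * ‖y - x‖ := by
        rw [← dist_eq_norm, dist_lineMap_left, Real.norm_of_nonneg ht.1, dist_comm, dist_eq_norm]
      _ = L * ‖y - x‖ ^ 2 * t := by ring
  simpa [remainder, γ] using image_norm_le_of_norm_deriv_right_le_deriv_boundary
    (fun t ht ↦ (hremainder t ht).continuousWithinAt)
    (fun t ht ↦ (hremainder t (Ico_subset_Icc_self ht)).mono_of_mem_nhdsWithin
      (Icc_mem_nhdsGE_of_mem ht))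
    (by simp [remainder, γ]) hquadratic hbound (right_mem_Icc.2 zero_le_one)

theorem le_add_fderiv_add_of_norm_fderiv_sub_le {f : E → ℝ} {f' : E → StrongDual ℝ E} {L : ℝ}
    (hs : StarConvex ℝ x s) (hf : ∀ z ∈ s, HasFDerivWithinAt f (f' z) s z)
    (hlip : ∀ z ∈ s, ‖f' z - f' x‖ ≤ L * ‖z - x‖) (hy : y ∈ s) :
    f y ≤ f x + f' x (y - x) + L / 2 * ‖y - x‖ ^ 2 := by
  have h := (le_abs_self _).trans (norm_sub_sub_fderiv_le_of_norm_fderiv_sub_le hs hf hlip hy)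
  linarith

theorem add_fderiv_le_of_convexOn {f : E → ℝ} {f' : StrongDual ℝ E} (hconv : ConvexOn ℝ s f)
    (hf : HasFDerivWithinAt f f' s x) (hx : x ∈ s) (hy : y ∈ s) :
    f x + f' (y - x) ≤ f y := by
  set γ : ℝ →ᵃ[ℝ] E := lineMap x y
  have hγ₀ : γ 0 = x := lineMap_apply_zero x y
  have hγ₁ : γ 1 = y := lineMap_apply_one x y
  have hderiv : HasDerivWithinAt (f ∘ γ) (f' (y - x)) (γ ⁻¹' s) 0 :=
    HasFDerivWithinAt.comp_hasDerivWithinAt 0 (by rwa [hγ₀]) hasDerivWithinAt_lineMap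
      (mapsTo_preimage γ s)
  have hslope : f' (y - x) ≤ slope (f ∘ γ) 0 1 :=
    (hconv.comp_affineMap γ).le_slope_of_hasDerivWithinAt (by simpa [hγ₀]) (by simpa [hγ₁])
      zero_lt_one hderiv
  simp only [slope_def_field, Function.comp_apply, hγ₀, hγ₁, sub_zero, div_one] at hslope
  linarith

end DescentLemma

section ProximalMajorant

/-- The objective `H = f + β S₁ - β S₂` of the minimization problem. -/
noncomputable def dcObjective {α : Type*} (f S₁ S₂ : α → ℝ) (β : ℝ) (y : α) : ℝ :=
  f y + β * S₁ y - β * S₂ y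

variable {E : Type*} [NormedAddCommGroup E] [NormedSpace ℝ E]

/-- The proximal majorant `Q` of `dcObjective f S₁ S₂ β` at `x`, with `f` and `S₂` linearized along
`p` and `q`, which stand for a derivative of `f` and a subgradient of `S₂` at `x`. -/
noncomputable def proximalMajorant (f S₁ S₂ : E → ℝ) (p q : StrongDual ℝ E) (β ρ : ℝ)
    (x y : E) : ℝ :=
  f x + p (y - x) + ρ / 2 * ‖y - x‖ ^ 2 + β * S₁ y - β * S₂ x - β * q (y - x)

variable {f S₁ S₂ : E → ℝ} {q : StrongDual ℝ E} {β ρ L : ℝ} {x y : E}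

theorem proximalMajorant_self (p : StrongDual ℝ E) :
    proximalMajorant f S₁ S₂ p q β ρ x x = dcObjective f S₁ S₂ β x := by
  simp [proximalMajorant, dcObjective]

theorem dcObjective_add_le_proximalMajorant {p : StrongDual ℝ E} (hβ : 0 ≤ β)
    (hf : f y ≤ f x + p (y - x) + L / 2 * ‖y - x‖ ^ 2) (hS₂ : S₂ x + q (y - x) ≤ S₂ y) :
    dcObjective f S₁ S₂ β y + (ρ - L) / 2 * ‖y - x‖ ^ 2 ≤
      proximalMajorant f S₁ S₂ p q β ρ x y := by
  have hβS₂ := mul_le_mul_of_nonneg_left hS₂ hβ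
  unfold dcObjective proximalMajorant
  linarith

theorem le_add_mul_norm_sq_of_inexact_subgradient {φ : E → ℝ} {w : StrongDual ℝ E} {c : ℝ}
    (hφ : φ y + w (x - y) ≤ φ x) (hw : ‖w‖ ≤ c * ‖y - x‖) :
    φ y ≤ φ x + c * ‖y - x‖ ^ 2 := by
  have hpairing : w (y - x) ≤ c * ‖y - x‖ * ‖y - x‖ :=
    (le_abs_self _).trans (w.le_of_opNorm_le hw (y - x))
  rw [← neg_sub y x, map_neg] at hφ
  linarith

theorem pmm_sufficient_descent_general {f' : E → StrongDual ℝ E} {s : Set E}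
    (hs : StarConvex ℝ x s) (hf : ∀ z ∈ s, HasFDerivWithinAt f (f' z) s z)
    (hlip : ∀ z ∈ s, ‖f' z - f' x‖ ≤ L * ‖z - x‖) (hy : y ∈ s)
    (hS₂ : S₂ x + q (y - x) ≤ S₂ y) (hβ : 0 ≤ β) {ξ : ℝ} (hξ : ξ < 1 / 2)
    (hρ : L / (1 - 2 * ξ) < ρ) {w : StrongDual ℝ E}
    (hsub : proximalMajorant f S₁ S₂ (f' x) q β ρ x y + w (x - y) ≤
      proximalMajorant f S₁ S₂ (f' x) q β ρ x x)
    (hw : ‖w‖ ≤ ξ * ρ * ‖y - x‖) :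
    0 < (1 - 2 * ξ) * ρ / 2 - L / 2 ∧
      dcObjective f S₁ S₂ β y + ((1 - 2 * ξ) * ρ / 2 - L / 2) * ‖y - x‖ ^ 2 ≤
        dcObjective f S₁ S₂ β x := by
  have hLρ : L < ρ * (1 - 2 * ξ) := (div_lt_iff₀ (by linarith)).1 hρ
  have hmajor : dcObjective f S₁ S₂ β y + (ρ - L) / 2 * ‖y - x‖ ^ 2 ≤
      proximalMajorant f S₁ S₂ (f' x) q β ρ x y :=
    dcObjective_add_le_proximalMajorant hβ
      (le_add_fderiv_add_of_norm_fderiv_sub_le hs hf hlip hy) hS₂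
  have hinexact : proximalMajorant f S₁ S₂ (f' x) q β ρ x y ≤
      dcObjective f S₁ S₂ β x + ξ * ρ * ‖y - x‖ ^ 2 :=
    proximalMajorant_self (f' x) ▸ le_add_mul_norm_sq_of_inexact_subgradient hsub hw
  constructor <;> linarith

end ProximalMajorant

/-- Sufficient descent lemma (Lemma G.1) for the inexact proximal
majorization–minimization algorithm. -/
theorem pmm_sufficient_descent {E : Type*} [NormedAddCommGroup E]
    [InnerProductSpace ℝ E] [CompleteSpace E]
    (f : E → ℝ) (Gf : E → E) (L : ℝ) (hL : 0 ≤ L)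
    (hfdiff : ∀ X, HasGradientAt f (Gf X) X)
    (hflip : ∀ Y₁ Y₂ : E, ‖Gf Y₁ - Gf Y₂‖ ≤ L * ‖Y₁ - Y₂‖)
    (S₁ S₂ : E → ℝ) (hS₂conv : ConvexOn ℝ Set.univ S₂)
    (GS₂ : E → E) (hS₂diff : ∀ X, HasGradientAt S₂ (GS₂ X) X)
    (D : Set E) (β ξ ρ : ℝ) (hβ : 0 < β)
    (hξ : ξ ∈ Set.Ioo (0 : ℝ) (1 / 2)) (hρ : L / (1 - 2 * ξ) < ρ)
    (X Xp : E) (hX : X ∈ D) (hXp : Xp ∈ D) (W : E)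
    (Q H : E → ℝ)
    (hQ : ∀ Y, Q Y = f X + ⟪Gf X, Y - X⟫ + ρ / 2 * ‖Y - X‖ ^ 2 +
      β * S₁ Y - β * S₂ X - β * ⟪GS₂ X, Y - X⟫)
    (hH : ∀ Y, H Y = f Y + β * S₁ Y - β * S₂ Y)
    (hsub : ∀ Y ∈ D, Q Xp + ⟪W, Y - Xp⟫ ≤ Q Y)
    (hW : ‖W‖ ≤ ξ * ρ * ‖Xp - X‖) :
    0 < (1 - 2 * ξ) * ρ / 2 - L / 2 ∧
      H Xp + ((1 - 2 * ξ) * ρ / 2 - L / 2) * ‖Xp - X‖ ^ 2 ≤ H X := by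
  obtain rfl : Q = proximalMajorant f S₁ S₂ (InnerProductSpace.toDual ℝ E (Gf X))
      (InnerProductSpace.toDual ℝ E (GS₂ X)) β ρ X := funext hQ
  obtain rfl : H = dcObjective f S₁ S₂ β := funext hH
  have hlip (Y : E) :
      ‖InnerProductSpace.toDual ℝ E (Gf Y) - InnerProductSpace.toDual ℝ E (Gf X)‖ ≤
        L * ‖Y - X‖ := by
    simpa only [← map_sub, LinearIsometryEquiv.norm_map] using hflip Y X
  have hsubgrad : S₂ X + InnerProductSpace.toDual ℝ E (GS₂ X) (Xp - X) ≤ S₂ Xp :=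
    add_fderiv_le_of_convexOn hS₂conv (hS₂diff X).hasFDerivAt.hasFDerivWithinAt
      (Set.mem_univ X) (Set.mem_univ Xp)
  have hWdual : ‖InnerProductSpace.toDual ℝ E W‖ ≤ ξ * ρ * ‖Xp - X‖ := by
    rwa [LinearIsometryEquiv.norm_map]
  exact pmm_sufficient_descent_general (starConvex_univ X)
    (fun Y _ ↦ (hfdiff Y).hasFDerivAt.hasFDerivWithinAt) (fun Y _ ↦ hlip Y)
    (Set.mem_univ Xp) hsubgrad hβ.le hξ.2 hρ (hsub X hX) hWdual
end

section
/- Let E be a real inner product space, f, S₂ : E → ℝ differentiable, L, L₁ ≥ 0, β, ρ > 0, ξ ∈ (0, 1/2), and B ⊆ E. Assume ‖∇f(Y₁) - ∇f(Y₂)‖ ≤ L‖Y₁ - Y₂‖ for all Y₁, Y₂ ∈ E, and ‖∇S₂(Y₁) - ∇S₂(Y₂)‖ ≤ L₁‖Y₁ - Y₂‖ for all Y₁, Y₂ ∈ B. Let X, X⁺ ∈ B and Y ∈ E, and suppose the vector W := ∇f(X) + ρ(X⁺ - X) - β∇S₂(X) + Y satisfies ‖W‖ ≤ ξρ‖X⁺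 - X‖. Then the vector N := ∇f(X⁺) - β∇S₂(X⁺) + Y satisfies ‖N‖ ≤ (L + βL₁ + (ξ + 1)ρ)‖X⁺ - X‖. -/
theorem norm_sub_smul_add_le_norm_proximal_residual_add {𝕜 E : Type*} [NormedField 𝕜]
    [SeminormedAddCommGroup E] [NormedSpace 𝕜 E] (b r : 𝕜) (u u' v v' d y : E) :
    ‖u' - b • v' + y‖ ≤
      ‖u + r • d - b • v + y‖ + ‖u' - u‖ + ‖b‖ * ‖v' - v‖ + ‖r‖ * ‖d‖ := by
  set w := u + r • d - b • v + y with hw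
  have residual_decomposition :
      u' - b • v' + y = w + (u' - u) - b • (v' - v) - r • d := by
    rw [hw]
    module
  calc
    ‖u' - b • v' + y‖ = ‖w + (u' - u) - b • (v' - v) - r • d‖ := by
      rw [residual_decomposition]
    _ ≤ ‖w‖ + ‖u' - u‖ + ‖b • (v' - v)‖ + ‖r • d‖ :=
      norm_sub_le_of_le (norm_sub_le_of_le (norm_add_le _ _) le_rfl) le_rfl
    _ = ‖w‖ + ‖u' - u‖ + ‖b‖ * ‖v' - v‖ + ‖r‖ * ‖d‖ := by
      rw [norm_smul, norm_smul]

theorem pmm_relative_error_general {E : Type*} [SeminormedAddCommGroup E] [NormedSpace ℝ E]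
    {g h : E → E} {L L₁ β ρ ξ : ℝ} (hβ : 0 ≤ β) (hρ : 0 ≤ ρ) {B : Set E}
    (hg : ∀ z₁ ∈ B, ∀ z₂ ∈ B, ‖g z₁ - g z₂‖ ≤ L * ‖z₁ - z₂‖)
    (hh : ∀ z₁ ∈ B, ∀ z₂ ∈ B, ‖h z₁ - h z₂‖ ≤ L₁ * ‖z₁ - z₂‖)
    {x x' : E} (hx : x ∈ B) (hx' : x' ∈ B) {y : E}
    (hw : ‖g x + ρ • (x' - x) - β • h x + y‖ ≤ ξ * ρ * ‖x' - x‖) :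
    ‖g x' - β • h x' + y‖ ≤ (L + β * L₁ + (ξ + 1) * ρ) * ‖x' - x‖ :=
  calc
    ‖g x' - β • h x' + y‖
      ≤ ‖g x + ρ • (x' - x) - β • h x + y‖ + ‖g x' - g x‖
          + β * ‖h x' - h x‖ + ρ * ‖x' - x‖ := by
        simpa only [Real.norm_of_nonneg hβ, Real.norm_of_nonneg hρ] using
          norm_sub_smul_add_le_norm_proximal_residual_add β ρ
            (g x) (g x') (h x) (h x') (x' - x) y
    _ ≤ ξ * ρ * ‖x' - x‖ + L * ‖x' - x‖ + β * (L₁ * ‖x' - x‖) + ρ * ‖x' - x‖ := by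
        gcongr
        · exact hg x' hx' x hx
        · exact hh x' hx' x hx
    _ = (L + β * L₁ + (ξ + 1) * ρ) * ‖x' - x‖ := by ring

/-- Relative error lemma (Lemma G.2) for the inexact proximal
majorization–minimization algorithm. -/
theorem pmm_relative_error {E : Type*} [NormedAddCommGroup E]
    [InnerProductSpace ℝ E] [CompleteSpace E]
    (f S₂ : E → ℝ) (Gf GS₂ : E → E) (L L₁ : ℝ) (hL : 0 ≤ L) (hL₁ : 0 ≤ L₁)
    (β ρ ξ : ℝ) (hβ : 0 < β) (hρ : 0 < ρ) (hξ : ξ ∈ Set.Ioo (0 : ℝ) (1 / 2))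
    (B : Set E)
    (hfdiff : ∀ X, HasGradientAt f (Gf X) X)
    (hS₂diff : ∀ X, HasGradientAt S₂ (GS₂ X) X)
    (hflip : ∀ Y₁ Y₂ : E, ‖Gf Y₁ - Gf Y₂‖ ≤ L * ‖Y₁ - Y₂‖)
    (hS₂lip : ∀ Y₁ ∈ B, ∀ Y₂ ∈ B, ‖GS₂ Y₁ - GS₂ Y₂‖ ≤ L₁ * ‖Y₁ - Y₂‖)
    (X Xp : E) (hX : X ∈ B) (hXp : Xp ∈ B) (Y : E)
    (hW : ‖Gf X + ρ • (Xp - X) - β • GS₂ X + Y‖ ≤ ξ * ρ * ‖Xp - X‖) :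
    ‖Gf Xp - β • GS₂ Xp + Y‖ ≤ (L + β * L₁ + (ξ + 1) * ρ) * ‖Xp - X‖ := by
  exact pmm_relative_error_general hβ.le hρ.le (fun Y₁ _ Y₂ _ => hflip Y₁ Y₂) hS₂lip hX hXp hW
end

section
/- Let (Δ_t)_{t≥0} be a nonincreasing sequence of nonnegative real numbers converging to 0, and let a₁ > 0 and θ ≥ 1 be such that Δ_t ≤ (Δ_{t-1} - Δ_t) + a₁ (Δ_{t-1} - Δ_t)^θ for all t ≥ 1. Then there exist w > 0 and ϑ ∈ [0, 1) such that Δ_t ≤ w ϑ^t for all t ≥ 0. -/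
open Filter

/-!
All differences `d = Δ_t - Δ_{t+1}` between nonnegative terms lie in `[0, Δ_0]`, where the convex
power `d ^ θ` is at most `Δ_0 ^ (θ - 1) * d`. So the recursion is linear from the very first step,
`Δ_{t+1} ≤ c * (Δ_t - Δ_{t+1})` with `c = 1 + a₁ * Δ_0 ^ (θ - 1)`, and solving for `Δ_{t+1}` gives
contraction by `c / (c + 1)`.
-/

section LinearRecursion

variable {K : Type*} [Field K] [LinearOrder K] [IsStrictOrderedRing K] {c : K}

lemma div_add_one_mem_Ico (hc : 0 ≤ c) : c / (c + 1) ∈ Set.Ico (0 : K) 1 :=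
  ⟨by positivity, (div_lt_one (by positivity)).2 (lt_add_one c)⟩

lemma le_mul_sub_iff_le_div_add_one_mul {x y : K} (hc : 0 < c + 1) :
    y ≤ c * (x - y) ↔ y ≤ c / (c + 1) * x := by
  rw [div_mul_eq_mul_div, le_div_iff₀ hc, mul_sub, le_sub_iff_add_le, mul_add_one, mul_comm y c,
    add_comm y]

end LinearRecursion

lemma le_div_add_one_pow_mul_of_le_mul_sub {u : ℕ → ℝ} {c : ℝ} (hc : 0 ≤ c) (n : ℕ)
    (h : ∀ k < n, u (k + 1) ≤ c * (u k - u (k + 1))) :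
    u n ≤ (c / (c + 1)) ^ n * u 0 :=
  le_geom (div_add_one_mem_Ico hc).1 n fun k hk ↦
    (le_mul_sub_iff_le_div_add_one_mul (by positivity)).1 (h k hk)

lemma rpow_le_rpow_sub_one_mul {x M p : ℝ} (hx : 0 ≤ x) (hxM : x ≤ M) (hp : 1 ≤ p) :
    x ^ p ≤ M ^ (p - 1) * x :=
  calc
    x ^ p = x ^ (p - 1) * x := by
      rw [← Real.rpow_add_one' hx (by linarith), sub_add_cancel]
    _ ≤ M ^ (p - 1) * x := by
      have : 0 ≤ p - 1 := sub_nonneg.2 hp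
      gcongr

lemma add_mul_rpow_le_mul {x M p : ℝ} (a : ℝ) (hx : 0 ≤ x) (hxM : x ≤ M) (hp : 1 ≤ p) :
    x + a * x ^ p ≤ (1 + |a| * M ^ (p - 1)) * x :=
  calc
    x + a * x ^ p ≤ x + |a| * (M ^ (p - 1) * x) := by
      gcongr
      exacts [le_abs_self a, rpow_le_rpow_sub_one_mul hx hxM hp]
    _ = (1 + |a| * M ^ (p - 1)) * x := by ring

theorem tail_sum_linear_convergence_general {Δ : ℕ → ℝ} (hΔ : Antitone Δ) {a θ : ℝ} (hθ : 1 ≤ θ)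
    (hrec : ∀ t, Δ (t + 1) ≤ (Δ t - Δ (t + 1)) + a * (Δ t - Δ (t + 1)) ^ θ) :
    ∃ w > 0, ∃ ϑ ∈ Set.Ico (0 : ℝ) 1, ∀ t, Δ t ≤ w * ϑ ^ t := by
  set c := 1 + |a| * |Δ 0| ^ (θ - 1)
  have hc : 0 ≤ c := by positivity
  refine ⟨|Δ 0| + 1, by positivity, c / (c + 1), div_add_one_mem_Ico hc, fun t ↦ ?_⟩
  rcases lt_or_ge (Δ t) 0 with hneg | hnonneg
  · exact hneg.le.trans (by positivity)
  have hlinear : ∀ k < t, Δ (k + 1) ≤ c * (Δ k - Δ (k + 1)) := fun k hk ↦ by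
    have hdiff_nonneg : 0 ≤ Δ k - Δ (k + 1) := sub_nonneg.2 (hΔ k.le_succ)
    have hdiff_le : Δ k - Δ (k + 1) ≤ |Δ 0| := by
      linarith [hΔ k.zero_le, hΔ (Nat.succ_le_of_lt hk), le_abs_self (Δ 0)]
    exact (hrec k).trans (add_mul_rpow_le_mul a hdiff_nonneg hdiff_le hθ)
  calc
    Δ t ≤ (c / (c + 1)) ^ t * Δ 0 := le_div_add_one_pow_mul_of_le_mul_sub hc t hlinear
    _ ≤ (c / (c + 1)) ^ t * (|Δ 0| + 1) := by
      gcongr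
      linarith [le_abs_self (Δ 0)]
    _ = (|Δ 0| + 1) * (c / (c + 1)) ^ t := mul_comm _ _

/-- R-linear convergence recursion (core of Theorem 4.2(ii)): a nonincreasing
nonnegative sequence `Δ_t → 0` satisfying
`Δ_t ≤ (Δ_{t-1} - Δ_t) + a₁ (Δ_{t-1} - Δ_t)^θ` with `θ ≥ 1` decays
geometrically. -/
theorem tail_sum_linear_convergence (Δ : ℕ → ℝ)
    (hnn : ∀ t, 0 ≤ Δ t) (hmono : ∀ t, Δ (t + 1) ≤ Δ t)
    (hlim : Tendsto Δ atTop (nhds 0))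
    (a₁ θ : ℝ) (ha₁ : 0 < a₁) (hθ : 1 ≤ θ)
    (hrec : ∀ t : ℕ, Δ (t + 1) ≤ (Δ t - Δ (t + 1)) + a₁ * (Δ t - Δ (t + 1)) ^ θ) :
    ∃ w > 0, ∃ ϑ ∈ Set.Ico (0 : ℝ) 1, ∀ t : ℕ, Δ t ≤ w * ϑ ^ t :=
  tail_sum_linear_convergence_general (antitone_nat_of_succ_le hmono) hθ hrec
end

section
/- Let α ∈ (1/2, 1) and set τ := (1 - 2α)/(1 - α), so τ < 0. Let (Δ_t)_{t≥0} be a nonincreasing sequence of positive real numbers converging to 0, and let a₃ > 0 be such that Δ_t^{α/(1-α)} ≤ a₃ (Δ_{t-1} - Δ_t) for all t ≥ 1. Then there exists w > 0 such that Δ_t ≤ w · t^{-(1-α)/(2α-1)} for all t ≥ 1. -/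
open Filter

/-!
Put `q = τ < 0`, so that the recursion reads `Δ (t + 1) ^ (1 - q) ≤ a₃ * (Δ t - Δ (t + 1))`. The
point is that `Δ t ^ q` grows at least linearly. One step ending at `v` increases the `q`-th power
by at least `v ^ q - (v + v ^ (1 - q) / a₃) ^ q`, and with `s = v ^ (-q) / a₃` this equals
`(1 - (1 + s) ^ q) / (a₃ * s)`, a multiple of a secant slope at `1` of the convex function
`y ↦ y ^ q`. Hence it decreases in `v`, and its value at `Δ 0` bounds all increments from below.
-/

theorem convexOn_rpow_of_nonpos {q : ℝ} (hq : q ≤ 0) :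
    ConvexOn ℝ (Set.Ioi 0) fun y : ℝ ↦ y ^ q := by
  have hlog : ConvexOn ℝ (Set.Ioi 0) fun y ↦ q * Real.log y := by
    simpa [Pi.neg_def] using (strictConcaveOn_log_Ioi.concaveOn.smul (neg_nonneg.2 hq)).neg
  have hexp : ConvexOn ℝ (Set.Ioi 0) fun y ↦ Real.exp (q * Real.log y) :=
    ⟨convex_Ioi 0, fun _ hy _ hz _ _ hb hc hbc ↦
      (Real.exp_monotone (hlog.2 hy hz hb hc hbc)).trans
        (convexOn_exp.2 (Set.mem_univ _) (Set.mem_univ _) hb hc hbc)⟩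
  exact hexp.congr fun y hy ↦ by rw [Real.rpow_def_of_pos hy, mul_comm]

/-- The increase of the `q`-th power over a step from `u` to `v` of the recursion
`v ^ (1 - q) ≤ a * (u - v)` when equality holds, that is, when `u = v + v ^ (1 - q) / a`. -/
noncomputable def tightIncrement (q a v : ℝ) : ℝ :=
  v ^ q - (v + v ^ (1 - q) / a) ^ q

section tightIncrement

variable {q a : ℝ}

theorem tightIncrement_pos (hq : q < 0) (ha : 0 < a) {v : ℝ} (hv : 0 < v) :
    0 < tightIncrement q a v :=
  sub_pos.2 <| Real.rpow_lt_rpow_of_neg hv (lt_add_of_pos_right v (by positivity)) hq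

theorem tightIncrement_eq_neg_slope (ha : 0 < a) {v : ℝ} (hv : 0 < v) :
    tightIncrement q a v = -(((1 + v ^ (-q) / a) ^ q - 1 ^ q) / (1 + v ^ (-q) / a - 1)) / a := by
  have hfactor : v + v ^ (1 - q) / a = v * (1 + v ^ (-q) / a) := by
    rw [sub_eq_add_neg, Real.rpow_add hv, Real.rpow_one]
    ring
  rw [tightIncrement, hfactor, Real.mul_rpow hv.le (by positivity), Real.one_rpow,
    add_sub_cancel_left, Real.rpow_neg hv.le]
  field_simp
  ring

theorem antitoneOn_tightIncrement (hq : q ≤ 0) (ha : 0 < a) :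
    AntitoneOn (tightIncrement q a) (Set.Ioi 0) := by
  intro v (hv : 0 < v) w (hw : 0 < w) hvw
  have hpow : v ^ (-q) ≤ w ^ (-q) := Real.rpow_le_rpow hv.le hvw (neg_nonneg.2 hq)
  have hv' : 0 < v ^ (-q) / a := by positivity
  have hw' : 0 < w ^ (-q) / a := by positivity
  rw [tightIncrement_eq_neg_slope ha hv, tightIncrement_eq_neg_slope ha hw]
  gcongr ?_ / a
  exact neg_le_neg <| (convexOn_rpow_of_nonpos hq).secant_mono (Set.mem_Ioi.2 one_pos)
    (Set.mem_Ioi.2 (by positivity)) (Set.mem_Ioi.2 (by positivity)) (by simpa using hv'.ne')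
    (by simpa using hw'.ne') (by gcongr)

theorem tightIncrement_le_rpow_sub_rpow (hq : q ≤ 0) (ha : 0 < a) {u v : ℝ} (hv : 0 < v)
    (h : v ^ (1 - q) ≤ a * (u - v)) : tightIncrement q a v ≤ v ^ q - u ^ q := by
  have hu : v + v ^ (1 - q) / a ≤ u := by
    linarith [(div_le_iff₀' ha).2 h]
  exact sub_le_sub_left (Real.rpow_le_rpow_of_nonpos (by positivity) hu hq) _

end tightIncrement

section Recursion

variable {q a : ℝ} {x : ℕ → ℝ}

theorem antitone_of_rpow_le_mul_sub {r : ℝ} (ha : 0 < a) (hpos : ∀ t, 0 < x t)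
    (hrec : ∀ t, x (t + 1) ^ r ≤ a * (x t - x (t + 1))) : Antitone x :=
  antitone_nat_of_succ_le fun t ↦ sub_nonneg.1 <|
    nonneg_of_mul_nonneg_right ((Real.rpow_nonneg (hpos (t + 1)).le r).trans (hrec t)) ha

theorem tightIncrement_mul_le_rpow (hq : q ≤ 0) (ha : 0 < a) (hpos : ∀ t, 0 < x t)
    (hrec : ∀ t, x (t + 1) ^ (1 - q) ≤ a * (x t - x (t + 1))) (t : ℕ) :
    tightIncrement q a (x 0) * t ≤ x t ^ q := by
  induction t with
  | zero => simpa using (Real.rpow_pos_of_pos (hpos 0) q).le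
  | succ t ih =>
    have hmono : x (t + 1) ≤ x 0 := antitone_of_rpow_le_mul_sub ha hpos hrec (Nat.zero_le _)
    have hstep : tightIncrement q a (x 0) ≤ x (t + 1) ^ q - x t ^ q :=
      (antitoneOn_tightIncrement hq ha (hpos (t + 1)) (hpos 0) hmono).trans
        (tightIncrement_le_rpow_sub_rpow hq ha (hpos (t + 1)) (hrec t))
    push_cast
    linarith

theorem le_tightIncrement_rpow_inv_mul (hq : q < 0) (ha : 0 < a) (hpos : ∀ t, 0 < x t)
    (hrec : ∀ t, x (t + 1) ^ (1 - q) ≤ a * (x t - x (t + 1))) {t : ℕ} (ht : 1 ≤ t) :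
    x t ≤ tightIncrement q a (x 0) ^ q⁻¹ * (t : ℝ) ^ q⁻¹ := by
  have hinc : 0 < tightIncrement q a (x 0) := tightIncrement_pos hq ha (hpos 0)
  have ht' : (0 : ℝ) < t := Nat.cast_pos.2 ht
  rw [← Real.mul_rpow hinc.le ht'.le, Real.le_rpow_inv_iff_of_neg (hpos t) (by positivity) hq]
  exact tightIncrement_mul_le_rpow hq.le ha hpos hrec t

end Recursion

/-- R-sublinear convergence recursion (core of Theorem 4.2(iii)): for
`α ∈ (1/2, 1)` (so that `τ := (1-2α)/(1-α) < 0`), a nonincreasing positive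
sequence `Δ_t → 0` satisfying `Δ_t^{α/(1-α)} ≤ a₃ (Δ_{t-1} - Δ_t)` obeys
`Δ_t = O(t^{-(1-α)/(2α-1)})`. -/
theorem tail_sum_sublinear_convergence (α : ℝ) (hα : α ∈ Set.Ioo (1 / 2 : ℝ) 1)
    (τ : ℝ) (hτ : τ = (1 - 2 * α) / (1 - α)) (hτneg : τ < 0)
    (Δ : ℕ → ℝ) (hpos : ∀ t, 0 < Δ t) (hmono : ∀ t, Δ (t + 1) ≤ Δ t)
    (hlim : Tendsto Δ atTop (nhds 0))
    (a₃ : ℝ) (ha₃ : 0 < a₃)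
    (hrec : ∀ t : ℕ, Δ (t + 1) ^ (α / (1 - α)) ≤ a₃ * (Δ t - Δ (t + 1))) :
    ∃ w > 0, ∀ t : ℕ, 1 ≤ t → Δ t ≤ w * (t : ℝ) ^ (-(1 - α) / (2 * α - 1)) := by
  have h_recursion_exponent : α / (1 - α) = 1 - τ := by
    have : 1 - α ≠ 0 := (sub_pos.2 hα.2).ne'
    rw [hτ]
    field_simp
    ring
  have h_rate_exponent : -(1 - α) / (2 * α - 1) = τ⁻¹ := by
    rw [hτ, inv_div, ← neg_sub (2 * α) 1, div_neg, neg_div]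
  rw [h_recursion_exponent] at hrec
  rw [h_rate_exponent]
  exact ⟨tightIncrement τ a₃ (Δ 0) ^ τ⁻¹,
    Real.rpow_pos_of_pos (tightIncrement_pos hτneg ha₃ (hpos 0)) _,
    fun t ht ↦ le_tightIncrement_rpow_inv_mul hτneg ha₃ hpos hrec ht⟩
end
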